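/- Uniform quantitative enhancement via bounded cutsets (finite-volume core of Proposition 4.1, cutset side). Let (V, E, ends, α) be a finite graph with boundary condition, p ∈ (0,1), q > 0, and let D ≥ 1 be an integer. Let Ê ⊆ E be such that every e ∈ Ê admits a cutset χ_e for e included in E∖Ê with |χ_e| ≤ D−1. Set δ := |p'−p| · (1−max(p,p'))^{D−1}. Then: if p < p', one has P_{(p+δ·1_{e∈Ê})_{e∈E}} ≼ φ^α_{G,p,q}; and if p > p', one has φ^α_{G,p,q} ≼ P_{(p−δ·1_{e∈Ê})_{e∈E}}. -/

import Mathlib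

open scoped Classical

noncomputable section

namespace FKPaper

variable {V E : Type*}

/-- One-step adjacency between wired vertices through an edge in `F`. -/
def Step (ends : E → Sym2 V) (α : Setoid V) (F : Set E) (x y : Quotient α) : Prop :=
  ∃ e ∈ F, Sym2.map (Quotient.mk α) (ends e) = s(x, y)

/-- Setoid of connected components of the wired multigraph with edge set `F`. -/
def connSetoid (ends : E → Sym2 V) (α : Setoid V) (F : Set E) : Setoid (Quotient α) :=
  Relation.EqvGen.setoid (Step ends α F)

/-- Connectivity in the wired multigraph with edge set `F`. -/
def Conn (ends : E → Sym2 V) (α : Setoid V) (F : Set E) (x y : Quotient α) : Prop :=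
  (connSetoid ends α F).r x y

/-- The two endpoints of `e` are joined in the wired multigraph with edge set `F`. -/
def EndsConn (ends : E → Sym2 V) (α : Setoid V) (F : Set E) (e : E) : Prop :=
  ∀ x y : V, ends e = s(x, y) → Conn ends α F (Quotient.mk α x) (Quotient.mk α y)

/-- Number of connected components `k(ω, α)`. -/
def numComponents (ends : E → Sym2 V) (α : Setoid V) (ω : E → Bool) : ℕ :=
  Nat.card (Quotient (connSetoid ends α {e | ω e = true}))

/-- `p' = p / (p + q (1 - p))`. -/
def pPrime (p q : ℝ) : ℝ := p / (p + q * (1 - p))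

/-- Total mass of a set under a weight function. -/
def massOf {ι : Type*} [Fintype ι] (w : ι → ℝ) (A : Set ι) : ℝ :=
  ∑ x ∈ Finset.univ.filter (· ∈ A), w x

/-- Normalized probability of a set under a weight function. -/
def probOf {ι : Type*} [Fintype ι] (w : ι → ℝ) (A : Set ι) : ℝ :=
  massOf w A / massOf w Set.univ

/-- FK weight of a configuration. -/
def fkWeight [Fintype E] (ends : E → Sym2 V) (α : Setoid V) (p q : ℝ) (ω : E → Bool) : ℝ :=
  p ^ (Finset.univ.filter fun e => ω e = true).card *
    (1 - p) ^ (Finset.univ.filter fun e => ω e = false).card *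
    q ^ numComponents ends α ω

/-- The FK (random cluster) probability measure `φ^α_{G,p,q}`. -/
def fkProb [Fintype E] (ends : E → Sym2 V) (α : Setoid V) (p q : ℝ)
    (A : Set (E → Bool)) : ℝ :=
  probOf (fkWeight ends α p q) A

/-- Inhomogeneous Bernoulli weight. -/
def berWeight [Fintype E] (pe : E → ℝ) (ω : E → Bool) : ℝ :=
  ∏ e, if ω e = true then pe e else 1 - pe e

/-- Inhomogeneous Bernoulli product measure `P_{(p_e)}`. -/
def berProb [Fintype E] (pe : E → ℝ) (A : Set (E → Bool)) : ℝ :=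
  probOf (berWeight pe) A

/-- Increasing sets of configurations. -/
def Increasing (A : Set (E → Bool)) : Prop :=
  ∀ ⦃ω ω' : E → Bool⦄, ω ∈ A → (∀ e, ω e ≤ ω' e) → ω' ∈ A

/-- Stochastic domination `μ ≼ ν`. -/
def StochDom [Fintype E] (μ ν : Set (E → Bool) → ℝ) : Prop :=
  ∀ A : Set (E → Bool), Increasing A → μ A ≤ ν A

/-- `Q_F(e)`: cutsets for `e` included in `F`. -/
def Cutsets (ends : E → Sym2 V) (α : Setoid V) (F : Set E) (e : E) : Set (Set E) :=
  {χ | χ ⊆ F ∧ ¬ EndsConn ends α {e' | e' ∉ χ ∧ e' ≠ e} e}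


/-- Flip an edge. -/
def flipE (e : E) (ω : E → Bool) : E → Bool := Function.update ω e (!(ω e))

theorem flipE_flipE (e : E) (ω : E → Bool) : flipE e (flipE e ω) = ω := by
  funext x
  by_cases h : x = e
  · subst h; simp [flipE]
  · simp [flipE, h]

theorem sum_nonneg_pair [Fintype E] (e : E) (F : (E → Bool) → ℝ)
    (h : ∀ ω, ω e = false → 0 ≤ F ω + F (Function.update ω e true)) : 0 ≤ ∑ ω, F ω := by
  have h1 : ∑ ω, F (flipE e ω) = ∑ ω, F ω :=
    Equiv.sum_comp (⟨flipE e, flipE e, flipE_flipE e, flipE_flipE e⟩ : (E → Bool) ≃ (E → Bool)) F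
  have h2 : 0 ≤ ∑ ω, (F ω + F (flipE e ω)) := by
    apply Finset.sum_nonneg
    intro ω _
    rcases hω : ω e with _ | _
    · simpa [flipE, hω] using h ω hω
    · have := h (flipE e ω) (by simp [flipE, hω])
      have h3 : Function.update (flipE e ω) e true = ω := by
        funext x
        by_cases hx : x = e
        · subst hx; simp [hω]
        · simp [flipE, hx]
      rw [h3] at this
      linarith
  rw [Finset.sum_add_distrib, h1] at h2
  linarith

/-- Dependence on the edges of `S` only. -/
def DepOn (S : Set E) (f : (E → Bool) → ℝ) : Prop :=
  ∀ ω ω', (∀ e ∈ S, ω e = ω' e) → f ω = f ω'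

theorem DepOn.update {S : Set E} {f : (E → Bool) → ℝ} (h : DepOn S f) {e : E} (he : e ∉ S)
    (ω : E → Bool) (b : Bool) : f (Function.update ω e b) = f ω := by
  apply h
  intro x hx
  have : x ≠ e := fun h => he (h ▸ hx)
  simp [this]

/-- averaging operator -/
def avgE (r : ℝ) (e : E) (f : (E → Bool) → ℝ) (ω : E → Bool) : ℝ :=
  r * f (Function.update ω e true) + (1 - r) * f (Function.update ω e false)

/-- discrete derivative -/
def dE (e : E) (f : (E → Bool) → ℝ) (ω : E → Bool) : ℝ :=
  f (Function.update ω e true) - f (Function.update ω e false)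

theorem update_agree {S : Set E} {e : E} {ω ω' : E → Bool} (h : ∀ x ∈ S, ω x = ω' x) (b : Bool) :
    ∀ x ∈ insert e S, Function.update ω e b x = Function.update ω' e b x := by
  intro x hx
  by_cases hxe : x = e
  · subst hxe; simp
  · simp only [Function.update_of_ne hxe]
    exact h x (hx.resolve_left hxe)

theorem DepOn.avg {S : Set E} {e : E} {f : (E → Bool) → ℝ} (h : DepOn (insert e S) f) (r : ℝ) :
    DepOn S (avgE r e f) := by
  intro ω ω' hω
  unfold avgE
  rw [h _ _ (update_agree hω true), h _ _ (update_agree hω false)]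

theorem DepOn.d {S : Set E} {e : E} {f : (E → Bool) → ℝ} (h : DepOn (insert e S) f) :
    DepOn S (dE e f) := by
  intro ω ω' hω
  unfold dE
  rw [h _ _ (update_agree hω true), h _ _ (update_agree hω false)]

theorem avg_mono {r : ℝ} (h0 : 0 ≤ r) (h1 : r ≤ 1) (e : E) {f : (E → Bool) → ℝ}
    (hf : Monotone f) : Monotone (avgE r e f) := by
  intro ω ω' h
  have h2 : ∀ b, f (Function.update ω e b) ≤ f (Function.update ω' e b) := fun b =>
    hf (update_le_update_iff.2 ⟨le_rfl, fun x _ => h x⟩)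
  unfold avgE
  have := mul_le_mul_of_nonneg_left (h2 true) h0
  have := mul_le_mul_of_nonneg_left (h2 false) (sub_nonneg.2 h1)
  linarith

theorem d_nonneg (e : E) {f : (E → Bool) → ℝ} (hf : Monotone f) (ω) : 0 ≤ dE e f ω := by
  unfold dE
  refine sub_nonneg.2 (hf (update_le_update_iff.2 ⟨by simp, fun x _ => le_rfl⟩))

theorem sub_avg (r : ℝ) (e : E) (f : (E → Bool) → ℝ) (ω) :
    f ω - avgE r e f ω = ((if ω e = true then 1 else 0) - r) * dE e f ω := by
  unfold avgE dE
  have h : f ω = f (Function.update ω e (ω e)) := by simp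
  rcases hω : ω e with _ | _
  · rw [hω] at h; rw [h]; simp; ring
  · rw [hω] at h; rw [h]; simp; ring

theorem ber_avg [Fintype E] (r : E → ℝ) (e : E) (f : (E → Bool) → ℝ) :
    ∑ ω, berWeight r ω * avgE (r e) e f ω = ∑ ω, berWeight r ω * f ω := by
  have key : ∀ ω : E → Bool, ω e = false →
      berWeight r ω * r e = berWeight r (Function.update ω e true) * (1 - r e) := by
    intro ω hω
    unfold berWeight
    rw [← Finset.mul_prod_erase _ _ (Finset.mem_univ e),
      ← Finset.mul_prod_erase Finset.univ (fun x => if Function.update ω e true x = true then _ else _)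
        (Finset.mem_univ e)]
    have : ∏ x ∈ Finset.univ.erase e, (if Function.update ω e true x = true then r x else 1 - r x)
        = ∏ x ∈ Finset.univ.erase e, (if ω x = true then r x else 1 - r x) := by
      apply Finset.prod_congr rfl
      intro x hx
      rw [Function.update_of_ne (Finset.ne_of_mem_erase hx)]
    rw [this]
    simp [hω]; ring
  have pair : ∀ ω : E → Bool, ω e = false →
      berWeight r ω * (f ω - avgE (r e) e f ω) +
      berWeight r (Function.update ω e true) *
        (f (Function.update ω e true) - avgE (r e) e f (Function.update ω e true)) = 0 := by
    intro ω hω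
    rw [sub_avg, sub_avg]
    have hd : dE e f (Function.update ω e true) = dE e f ω := by simp [dE]
    rw [hd]
    simp only [hω, Function.update_self]
    have := key ω hω
    simp
    linear_combination (-dE e f ω) * this
  have h1 := sum_nonneg_pair e (fun ω => berWeight r ω * (f ω - avgE (r e) e f ω))
    (fun ω hω => (pair ω hω).ge)
  have h2 := sum_nonneg_pair e (fun ω => -(berWeight r ω * (f ω - avgE (r e) e f ω)))
    (fun ω hω => by have := pair ω hω; linarith)
  rw [Finset.sum_neg_distrib] at h2
  simp only [mul_sub, Finset.sum_sub_distrib] at h1 h2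
  linarith

theorem ber_total [Fintype E] (r : E → ℝ) : ∑ ω, berWeight r ω = 1 := by
  have := Finset.prod_univ_sum (fun _ : E => (Finset.univ : Finset Bool))
    (fun e b => if b = true then r e else 1 - r e)
  rw [Fintype.piFinset_univ] at this
  unfold berWeight
  rw [← this]
  simp

/-- comparison statement for functions depending on `S` -/
def Cmp [Fintype E] (s : ℝ) (w : (E → Bool) → ℝ) (r : E → ℝ) (S : Set E) : Prop :=
  ∀ f, Monotone f → DepOn S f →
    0 ≤ s * (∑ ω, w ω * f ω - (∑ ω, berWeight r ω * f ω) * ∑ ω, w ω)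

theorem cmp_empty [Fintype E] (s : ℝ) (w : (E → Bool) → ℝ) (r : E → ℝ) : Cmp s w r ∅ := by
  intro f _ hf
  have h : ∀ ω, f ω = f (fun _ => false) := fun ω => hf _ _ (by simp)
  simp_rw [h, ← Finset.sum_mul, ber_total]
  apply le_of_eq; ring

theorem cmp_insert [Fintype E] (s : ℝ) (w : (E → Bool) → ℝ) (r : E → ℝ) (S : Set E) (e : E)
    (h0 : 0 ≤ r e) (h1 : r e ≤ 1)
    (hg : ∀ g, (∀ ω, 0 ≤ g ω) → DepOn S g →
      0 ≤ s * ∑ ω, w ω * (((if ω e = true then 1 else 0) - r e) * g ω))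
    (hS : Cmp s w r S) : Cmp s w r (insert e S) := by
  intro f hf hd
  have a := hS (avgE (r e) e f) (avg_mono h0 h1 e hf) (hd.avg _)
  have b := hg (dE e f) (d_nonneg e hf) hd.d
  simp_rw [← sub_avg, mul_sub, Finset.sum_sub_distrib] at b
  rw [ber_avg] at a
  linarith

theorem card_merge {X : Type*} [Finite X] (r r' : Setoid X) (x y : X) (hxy : ¬ r x y)
    (h : ∀ a b, r' a b ↔ r a b ∨ (r a x ∧ r b y) ∨ (r a y ∧ r b x)) :
    Nat.card (Quotient r) = Nat.card (Quotient r') + 1 := by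
  have hle : ∀ a b, r a b → r' a b := fun a b hab => (h a b).2 (Or.inl hab)
  let F : {c : Quotient r // c ≠ Quotient.mk r y} → Quotient r' := fun c =>
    Quotient.map' (s₁ := r) (s₂ := r') id hle c.1
  have hF : Function.Bijective F := by
    constructor
    · rintro ⟨a, ha⟩ ⟨b, hb⟩ hab
      induction a using Quotient.inductionOn with | _ a => ?_
      induction b using Quotient.inductionOn with | _ b => ?_
      have h1 : r' a b := Quotient.exact hab
      have ha' : ¬ r a y := fun hh => ha (Quotient.sound hh)
      have hb' : ¬ r b y := fun hh => hb (Quotient.sound hh)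
      have : r a b := by have := (h a b).1 h1; tauto
      exact Subtype.ext (Quotient.sound this)
    · intro c
      induction c using Quotient.inductionOn with | _ c => ?_
      by_cases hc : r c y
      · refine ⟨⟨Quotient.mk r x, fun hh => hxy (Quotient.exact hh)⟩, ?_⟩
        exact Quotient.sound ((h x c).2 (Or.inr (Or.inl ⟨r.refl x, hc⟩)))
      · exact ⟨⟨Quotient.mk r c, fun hh => hc (Quotient.exact hh)⟩, rfl⟩
  rw [← Nat.card_eq_of_bijective F hF]
  have : Fintype (Quotient r) := Fintype.ofFinite _
  rw [Nat.card_eq_fintype_card, Nat.card_eq_fintype_card, Fintype.card_subtype_compl,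
    Fintype.card_subtype_eq]
  have : 0 < Fintype.card (Quotient r) := Fintype.card_pos_iff.2 ⟨Quotient.mk r y⟩
  omega

theorem conn_mono (ends : E → Sym2 V) (α : Setoid V) {F G : Set E} (h : F ⊆ G) {a b} :
    Conn ends α F a b → Conn ends α G a b := by
  intro hab
  refine Relation.EqvGen.mono ?_ _ _ hab
  rintro a b ⟨e, he, h'⟩
  exact ⟨e, h he, h'⟩

theorem conn_insert (ends : E → Sym2 V) (α : Setoid V) (F : Set E) (e : E) (x y : V)
    (he : ends e = s(x, y)) (a b : Quotient α) :
    Conn ends α (insert e F) a b ↔ Conn ends α F a b ∨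
      (Conn ends α F a (Quotient.mk α x) ∧ Conn ends α F b (Quotient.mk α y)) ∨
      (Conn ends α F a (Quotient.mk α y) ∧ Conn ends α F b (Quotient.mk α x)) := by
  have symm : ∀ {G : Set E} {a b}, Conn ends α G a b → Conn ends α G b a :=
    fun {G _ _} h => (connSetoid ends α G).symm h
  have trans : ∀ {G : Set E} {a b c}, Conn ends α G a b → Conn ends α G b c → Conn ends α G a c :=
    fun {G _ _ _} h h' => (connSetoid ends α G).trans h h'
  have refl : ∀ {G : Set E} (a), Conn ends α G a a := fun {G} a => (connSetoid ends α G).refl a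
  constructor
  · intro h
    change Relation.EqvGen _ a b at h
    induction h with
    | rel a b h =>
      obtain ⟨e', he', h'⟩ := h
      rcases he' with rfl | he'
      · rw [he, Sym2.map_mk] at h'
        have h' := Sym2.eq_iff.1 h'
        rcases h' with ⟨rfl, rfl⟩ | ⟨rfl, rfl⟩
        · exact Or.inr (Or.inl ⟨refl _, refl _⟩)
        · exact Or.inr (Or.inr ⟨refl _, refl _⟩)
      · exact Or.inl (Relation.EqvGen.rel _ _ ⟨e', he', h'⟩)
    | refl a => exact Or.inl (refl a)
    | symm a b _ ih =>
      rcases ih with h | h | h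
      · exact Or.inl (symm h)
      · exact Or.inr (Or.inr ⟨h.2, h.1⟩)
      · exact Or.inr (Or.inl ⟨h.2, h.1⟩)
    | trans a b c _ _ ih1 ih2 =>
      rcases ih1 with h | h | h <;> rcases ih2 with h' | h' | h'
      · exact Or.inl (trans h h')
      · exact Or.inr (Or.inl ⟨trans h h'.1, h'.2⟩)
      · exact Or.inr (Or.inr ⟨trans h h'.1, h'.2⟩)
      · exact Or.inr (Or.inl ⟨h.1, trans (symm h') h.2⟩)
      · exact Or.inr (Or.inl ⟨h.1, h'.2⟩)
      · exact Or.inl (trans h.1 (symm h'.2))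
      · exact Or.inr (Or.inr ⟨h.1, trans (symm h') h.2⟩)
      · exact Or.inl (trans h.1 (symm h'.2))
      · exact Or.inr (Or.inr ⟨h.1, h'.2⟩)
  · have hxy : Conn ends α (insert e F) (Quotient.mk α x) (Quotient.mk α y) :=
      Relation.EqvGen.rel _ _ ⟨e, Set.mem_insert _ _, by rw [he, Sym2.map_mk]⟩
    have m : ∀ {a b}, Conn ends α F a b → Conn ends α (insert e F) a b :=
      fun h => conn_mono ends α (Set.subset_insert _ _) h
    rintro (h | h | h)
    · exact m h
    · exact trans (m h.1) (trans hxy (symm (m h.2)))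
    · exact trans (m h.1) (trans (symm hxy) (symm (m h.2)))

theorem endsConn_iff (ends : E → Sym2 V) (α : Setoid V) (F : Set E) (e : E) (x y : V)
    (he : ends e = s(x, y)) :
    EndsConn ends α F e ↔ Conn ends α F (Quotient.mk α x) (Quotient.mk α y) := by
  constructor
  · intro h; exact h x y he
  · intro h a b hab
    rw [he] at hab
    rcases Sym2.eq_iff.1 hab with ⟨rfl, rfl⟩ | ⟨rfl, rfl⟩
    · exact h
    · exact (connSetoid ends α F).symm h

/-- endpoints of `e` not joined by the other open edges -/
def NConn (ends : E → Sym2 V) (α : Setoid V) (e : E) (ω : E → Bool) : Prop :=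
  ¬ EndsConn ends α {e' | ω e' = true ∧ e' ≠ e} e

theorem numComponents_update [Fintype V] (ends : E → Sym2 V) (α : Setoid V) (e : E)
    (ω : E → Bool) (hω : ω e = false) :
    numComponents ends α ω = numComponents ends α (Function.update ω e true) +
      (if NConn ends α e ω then 1 else 0) := by
  have hF : {e' | ω e' = true ∧ e' ≠ e} = {e' | ω e' = true} := by
    ext e'
    simp only [Set.mem_ofPred_eq, and_iff_left_iff_imp]
    rintro h rfl
    rw [hω] at h; cases h
  have hF' : {e' | Function.update ω e true e' = true} = insert e {e' | ω e' = true} := by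
    ext e'
    by_cases h : e' = e
    · subst h; simp
    · simp [h]
  unfold numComponents NConn
  rw [hF, hF']
  obtain ⟨⟨x, y⟩, hxy⟩ := Sym2.mk_surjective (ends e)
  have hxy : ends e = s(x, y) := hxy.symm
  rw [endsConn_iff ends α _ e x y hxy]
  have ci := conn_insert ends α {e' | ω e' = true} e x y hxy
  by_cases h : Conn ends α {e' | ω e' = true} (Quotient.mk α x) (Quotient.mk α y)
  · rw [if_neg (not_not.2 h), add_zero]
    have : connSetoid ends α (insert e {e' | ω e' = true}) = connSetoid ends α {e' | ω e' = true} := by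
      ext a b
      refine (ci a b).trans ⟨?_, Or.inl⟩
      have tr := fun {a b c} => @Setoid.trans' _ (connSetoid ends α {e' | ω e' = true}) a b c
      have sy := fun {a b} => @Setoid.symm' _ (connSetoid ends α {e' | ω e' = true}) a b
      rintro (h' | h' | h')
      · exact h'
      · exact tr h'.1 (tr h (sy h'.2))
      · exact tr h'.1 (tr (sy h) (sy h'.2))
    rw [this]
  · rw [if_pos h]
    exact card_merge _ _ _ _ h ci

theorem nconn_update (ends : E → Sym2 V) (α : Setoid V) (e : E) (ω : E → Bool) (b : Bool) :
    NConn ends α e (Function.update ω e b) ↔ NConn ends α e ω := by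
  unfold NConn
  have : {e' | Function.update ω e b e' = true ∧ e' ≠ e} = {e' | ω e' = true ∧ e' ≠ e} := by
    ext e'
    by_cases h : e' = e
    · simp [h]
    · simp [h]
  rw [this]

theorem fk_ratio [Fintype V] [Fintype E] (ends : E → Sym2 V) (α : Setoid V) (p q : ℝ)
    (hp : p ∈ Set.Ioo (0 : ℝ) 1) (hq : 0 < q) (e : E) (ω : E → Bool) (hω : ω e = false) :
    ∃ C : ℝ, 0 < C ∧ fkWeight ends α p q (Function.update ω e true) = C * p ∧
      fkWeight ends α p q ω = C * (1 - p) * (if NConn ends α e ω then q else 1) := by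
  have h1 : (Finset.univ.filter fun x => Function.update ω e true x = true) =
      insert e (Finset.univ.filter fun x => ω x = true) := by
    ext x
    by_cases h : x = e
    · subst h; simp
    · simp [h]
  have h2 : (Finset.univ.filter fun x => ω x = false) =
      insert e (Finset.univ.filter fun x => Function.update ω e true x = false) := by
    ext x
    by_cases h : x = e
    · subst h; simp [hω]
    · simp [h]
  have c1 : (Finset.univ.filter fun x => Function.update ω e true x = true).card =
      (Finset.univ.filter fun x => ω x = true).card + 1 := by
    rw [h1, Finset.card_insert_of_notMem (by simp [hω])]
  have c2 : (Finset.univ.filter fun x => ω x = false).card =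
      (Finset.univ.filter fun x => Function.update ω e true x = false).card + 1 := by
    rw [h2, Finset.card_insert_of_notMem (by simp)]
  have hp0 := hp.1
  have hp1 : 0 < 1 - p := sub_pos.2 hp.2
  refine ⟨p ^ (Finset.univ.filter fun x => ω x = true).card *
    (1 - p) ^ (Finset.univ.filter fun x => Function.update ω e true x = false).card *
    q ^ numComponents ends α (Function.update ω e true), by positivity, ?_, ?_⟩
  · unfold fkWeight
    rw [c1]; ring
  · unfold fkWeight
    rw [c2, numComponents_update ends α e ω hω]
    split_ifs <;> ring

theorem fk_pos [Fintype E] (ends : E → Sym2 V) (α : Setoid V) (p q : ℝ)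
    (hp : p ∈ Set.Ioo (0 : ℝ) 1) (hq : 0 < q) (ω : E → Bool) : 0 < fkWeight ends α p q ω := by
  have hp0 := hp.1
  have hp1 : 0 < 1 - p := sub_pos.2 hp.2
  unfold fkWeight
  positivity

theorem fk_edge [Fintype V] [Fintype E] (ends : E → Sym2 V) (α : Setoid V) (p q : ℝ)
    (hp : p ∈ Set.Ioo (0 : ℝ) 1) (hq : 0 < q) (e : E) (S : Set E) (he : e ∉ S)
    (g : (E → Bool) → ℝ) (hd : DepOn S g) (s : ℝ) :
    s * (pPrime p q - p) * ∑ ω, fkWeight ends α p q ω * ((if NConn ends α e ω then 1 else 0) * g ω)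
      ≤ s * ∑ ω, fkWeight ends α p q ω * (((if ω e = true then 1 else 0) - p) * g ω) := by
  have hden : 0 < p + q * (1 - p) := by
    have := hp.1; have := mul_pos hq (sub_pos.2 hp.2); linarith
  have hpp : pPrime p q * (p + q * (1 - p)) = p := by unfold pPrime; field_simp
  have := sum_nonneg_pair e (fun ω => s * (fkWeight ends α p q ω * (((if ω e = true then 1 else 0) - p) * g ω))
    - s * (pPrime p q - p) * (fkWeight ends α p q ω * ((if NConn ends α e ω then 1 else 0) * g ω))) (by
    intro ω hω
    obtain ⟨C, hC, h1, h0⟩ := fk_ratio ends α p q hp hq e ω hω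
    simp only [nconn_update, hd.update he, h1, h0, hω, Function.update_self]
    apply le_of_eq
    rw [if_neg (by simp : ¬ (false = true)), if_pos trivial]
    by_cases hN : NConn ends α e ω
    · rw [if_pos hN, if_pos hN]
      linear_combination (C * s * g ω) * hpp
    · rw [if_neg hN, if_neg hN]
      ring)
  rw [Finset.sum_sub_distrib, ← Finset.mul_sum, ← Finset.mul_sum] at this
  linarith

theorem fk_closed [Fintype V] [Fintype E] (ends : E → Sym2 V) (α : Setoid V) (p q : ℝ)
    (hp : p ∈ Set.Ioo (0 : ℝ) 1) (hq : 0 < q) (e : E) (S : Set E) (he : e ∉ S)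
    (g : (E → Bool) → ℝ) (hg : ∀ ω, 0 ≤ g ω) (hd : DepOn S g) :
    (1 - max p (pPrime p q)) * ∑ ω, fkWeight ends α p q ω * g ω
      ≤ ∑ ω, fkWeight ends α p q ω * ((if ω e = false then 1 else 0) * g ω) := by
  have hden : 0 < p + q * (1 - p) := by
    have := hp.1; have := mul_pos hq (sub_pos.2 hp.2); linarith
  have hpp : pPrime p q * (p + q * (1 - p)) = p := by unfold pPrime; field_simp
  have hm1 := le_max_left p (pPrime p q)
  have hm2 := le_max_right p (pPrime p q)
  generalize max p (pPrime p q) = m at *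
  have := sum_nonneg_pair e (fun ω => fkWeight ends α p q ω * ((if ω e = false then 1 else 0) * g ω)
    - (1 - m) * (fkWeight ends α p q ω * g ω)) (by
    intro ω hω
    obtain ⟨C, hC, h1, h0⟩ := fk_ratio ends α p q hp hq e ω hω
    have hgC : 0 ≤ C * g ω := mul_nonneg hC.le (hg ω)
    simp only [hd.update he, h1, h0, hω, Function.update_self, if_true]
    rw [if_neg (by simp : ¬ (true = false))]
    by_cases hN : NConn ends α e ω
    · rw [if_pos hN]
      have : 0 ≤ (C * g ω) * ((m - pPrime p q) * (p + q * (1 - p))) :=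
        mul_nonneg hgC (mul_nonneg (sub_nonneg.2 hm2) hden.le)
      have e1 : (C * g ω) * (pPrime p q * (p + q * (1 - p))) = (C * g ω) * p := by rw [hpp]
      nlinarith
    · rw [if_neg hN]
      have : 0 ≤ (C * g ω) * (m - p) := mul_nonneg hgC (sub_nonneg.2 hm1)
      nlinarith)
  rw [Finset.sum_sub_distrib, ← Finset.mul_sum] at this
  linarith

theorem pPrime_mem (p q : ℝ) (hp : p ∈ Set.Ioo (0 : ℝ) 1) (hq : 0 < q) :
    0 < pPrime p q ∧ pPrime p q < 1 := by
  have h := mul_pos hq (sub_pos.2 hp.2)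
  have hden : 0 < p + q * (1 - p) := by have := hp.1; linarith
  unfold pPrime
  refine ⟨div_pos hp.1 hden, (div_lt_one hden).2 (by linarith)⟩

theorem fk_closed_set [Fintype V] [Fintype E] (ends : E → Sym2 V) (α : Setoid V) (p q : ℝ)
    (hp : p ∈ Set.Ioo (0 : ℝ) 1) (hq : 0 < q) (S : Set E)
    (g : (E → Bool) → ℝ) (hg : ∀ ω, 0 ≤ g ω) (hd : DepOn S g) (χ : Finset E)
    (hχ : ∀ e ∈ χ, e ∉ S) :
    (1 - max p (pPrime p q)) ^ χ.card * ∑ ω, fkWeight ends α p q ω * g ω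
      ≤ ∑ ω, fkWeight ends α p q ω * ((if ∀ e ∈ χ, ω e = false then 1 else 0) * g ω) := by
  have hm : 0 ≤ 1 - max p (pPrime p q) := by
    have := max_lt hp.2 (pPrime_mem p q hp hq).2; linarith
  induction χ using Finset.induction_on with
  | empty => simp
  | insert c χ hc ih =>
    have ih := ih (fun e he => hχ e (Finset.mem_insert_of_mem he))
    have h1 := fk_closed ends α p q hp hq c (S ∪ (χ : Set E))
      (by
        rintro (h | h)
        · exact hχ c (Finset.mem_insert_self _ _) h
        · exact hc (by simpa using h))
      (fun ω => (if ∀ e ∈ χ, ω e = false then 1 else 0) * g ω)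
      (fun ω => mul_nonneg (by split_ifs <;> norm_num) (hg ω))
      (by
        intro ω ω' h
        have e1 : g ω = g ω' := hd _ _ (fun e he => h e (Or.inl he))
        have e2 : (∀ e ∈ χ, ω e = false) ↔ (∀ e ∈ χ, ω' e = false) :=
          forall₂_congr (fun e he => by rw [h e (Or.inr (by simpa using he))])
        simp only [e1, e2])
    rw [Finset.card_insert_of_notMem hc, pow_succ', mul_assoc]
    refine (mul_le_mul_of_nonneg_left ih hm).trans (h1.trans (le_of_eq ?_))
    apply Finset.sum_congr rfl
    intro ω _
    simp only [Finset.forall_mem_insert]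
    by_cases a : ω c = false <;> by_cases b : ∀ e ∈ χ, ω e = false <;> simp [a, b]

theorem fk_cmp [Fintype V] [Fintype E]
    (ends : E → Sym2 V) (α : Setoid V)
    (p q : ℝ) (hp : p ∈ Set.Ioo (0 : ℝ) 1) (hq : 0 < q)
    (D : ℕ) (Ehat : Set E)
    (hcut : ∀ e ∈ Ehat, ∃ χ : Finset E,
      (χ : Set E) ∈ Cutsets ends α Ehatᶜ e ∧ χ.card ≤ D - 1)
    (δ s : ℝ) (hs : s * s = 1) (hs' : s * (pPrime p q - p) = |pPrime p q - p|)
    (hδ : δ = |pPrime p q - p| * (1 - max p (pPrime p q)) ^ (D - 1))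
    (r : E → ℝ) (hr : ∀ e, r e = p + s * (if e ∈ Ehat then δ else 0))
    (h01 : ∀ e, 0 ≤ r e ∧ r e ≤ 1) :
    Cmp s (fkWeight ends α p q) r Set.univ := by
  have hm : 0 ≤ 1 - max p (pPrime p q) := by
    have := max_lt hp.2 (pPrime_mem p q hp hq).2; linarith
  have hm1 : 1 - max p (pPrime p q) ≤ 1 := by
    have := le_max_left p (pPrime p q); have := hp.1; linarith
  have wpos := fk_pos ends α p q hp hq
  have step1 : ∀ T : Finset E, (T : Set E) ⊆ Ehat → Cmp s (fkWeight ends α p q) r T := by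
    intro T
    induction T using Finset.induction_on with
    | empty => intro _; simpa using cmp_empty s _ r
    | insert e T he ih =>
      intro hT
      rw [Finset.coe_insert] at hT ⊢
      have heE : e ∈ Ehat := hT (Set.mem_insert _ _)
      have hTE : (T : Set E) ⊆ Ehat := fun x hx => hT (Set.mem_insert_of_mem _ hx)
      refine cmp_insert s _ r _ e (h01 e).1 (h01 e).2 ?_ (ih hTE)
      intro g hg hd
      obtain ⟨χ, ⟨hχE, hχ⟩, hcard⟩ := hcut e heE
      have a := fk_edge ends α p q hp hq e T (by simpa using he) g hd s
      have b := fk_closed_set ends α p q hp hq T g hg hd χ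
        (fun x hx hxT => hχE (by simpa using hx) (hTE hxT))
      have c : ∑ ω, fkWeight ends α p q ω * ((if ∀ e ∈ χ, ω e = false then 1 else 0) * g ω) ≤
          ∑ ω, fkWeight ends α p q ω * ((if NConn ends α e ω then 1 else 0) * g ω) := by
        apply Finset.sum_le_sum
        intro ω _
        refine mul_le_mul_of_nonneg_left (mul_le_mul_of_nonneg_right ?_ (hg ω)) (wpos ω).le
        by_cases hc : ∀ e ∈ χ, ω e = false
        · have : NConn ends α e ω := by
            intro hcon
            apply hχ
            intro x y hxy
            refine conn_mono ends α ?_ (hcon x y hxy)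
            rintro e' ⟨h1, h2⟩
            refine ⟨fun h3 => ?_, h2⟩
            rw [hc e' (by simpa using h3)] at h1
            cases h1
          rw [if_pos hc, if_pos this]
        · rw [if_neg hc]; split_ifs <;> norm_num
      have hW : 0 ≤ ∑ ω, fkWeight ends α p q ω * g ω :=
        Finset.sum_nonneg (fun ω _ => mul_nonneg (wpos ω).le (hg ω))
      have d := mul_le_mul_of_nonneg_right (pow_le_pow_of_le_one hm hm1 hcard) hW
      rw [hs'] at a
      have f := (mul_le_mul_of_nonneg_left ((d.trans b).trans c) (abs_nonneg (pPrime p q - p))).trans a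
      rw [← mul_assoc, ← hδ] at f
      have key : ∑ ω, fkWeight ends α p q ω * (((if ω e = true then 1 else 0) - r e) * g ω) =
          ∑ ω, fkWeight ends α p q ω * (((if ω e = true then 1 else 0) - p) * g ω)
            - s * δ * ∑ ω, fkWeight ends α p q ω * g ω := by
        rw [Finset.mul_sum, ← Finset.sum_sub_distrib]
        apply Finset.sum_congr rfl
        intro ω _
        rw [hr e, if_pos heE]; ring
      rw [key]
      have : s * (s * δ * ∑ ω, fkWeight ends α p q ω * g ω) = δ * ∑ ω, fkWeight ends α p q ω * g ω := by
        linear_combination (δ * ∑ ω, fkWeight ends α p q ω * g ω) * hs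
      rw [mul_sub, this]; linarith
  have step2 : ∀ T : Finset E, Cmp s (fkWeight ends α p q) r ((T : Set E) ∪ Ehat) := by
    intro T
    induction T using Finset.induction_on with
    | empty => simpa using step1 (Finset.univ.filter (· ∈ Ehat)) (by intro x; simp)
    | insert e T he ih =>
      rw [Finset.coe_insert, Set.insert_union]
      by_cases heS : e ∈ (T : Set E) ∪ Ehat
      · rwa [Set.insert_eq_of_mem heS]
      · refine cmp_insert s _ r _ e (h01 e).1 (h01 e).2 ?_ ih
        intro g hg hd
        have a := fk_edge ends α p q hp hq e _ heS g hd s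
        have hre : r e = p := by
          rw [hr e, if_neg (fun h => heS (Or.inr h))]; ring
        rw [hre]
        refine le_trans ?_ a
        rw [hs']
        refine mul_nonneg (abs_nonneg _) (Finset.sum_nonneg (fun ω _ => mul_nonneg (wpos ω).le
          (mul_nonneg (by split_ifs <;> norm_num) (hg ω))))
  have := step2 Finset.univ
  simpa using this

theorem cmp_prob [Fintype E] (s : ℝ) (w : (E → Bool) → ℝ) (hw : ∀ ω, 0 < w ω) (r : E → ℝ)
    (h : Cmp s w r Set.univ) (A : Set (E → Bool)) (hA : Increasing A) :
    0 ≤ s * (probOf w A - berProb r A) := by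
  have hm : Monotone (fun ω : E → Bool => if ω ∈ A then (1 : ℝ) else 0) := by
    intro ω ω' hle
    by_cases h1 : ω ∈ A
    · have : ω' ∈ A := hA h1 hle
      simp [h1, this]
    · simp only [h1, if_false]; split_ifs <;> norm_num
  have a := h _ hm (fun ω ω' h => by rw [funext fun e => h e (Set.mem_univ e)])
  have hms : ∀ u : (E → Bool) → ℝ, massOf u A = ∑ ω, u ω * (if ω ∈ A then (1 : ℝ) else 0) := by
    intro u
    simp [massOf, Finset.sum_filter]
  have hmu : ∀ u : (E → Bool) → ℝ, massOf u Set.univ = ∑ ω, u ω := by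
    intro u
    simp [massOf]
  have hZ : 0 < ∑ ω, w ω := Finset.sum_pos (fun ω _ => hw ω) ⟨fun _ => false, Finset.mem_univ _⟩
  unfold berProb probOf
  rw [hmu, hmu, ber_total, div_one, hms, hms]
  have : s * ((∑ ω, w ω * (if ω ∈ A then (1 : ℝ) else 0)) / (∑ ω, w ω) -
      ∑ ω, berWeight r ω * (if ω ∈ A then (1 : ℝ) else 0)) =
      (s * (∑ ω, w ω * (if ω ∈ A then (1 : ℝ) else 0) -
      (∑ ω, berWeight r ω * (if ω ∈ A then (1 : ℝ) else 0)) * ∑ ω, w ω)) / ∑ ω, w ω := by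
    field_simp
  rw [this]
  exact div_nonneg a hZ.le

/-- **Proposition 4.1, cutset side** (uniform quantitative enhancement via bounded cutsets). -/
theorem uniform_enhancement_cutsets
    {V E : Type*} [Fintype V] [Fintype E]
    (ends : E → Sym2 V) (α : Setoid V)
    (p q : ℝ) (hp : p ∈ Set.Ioo (0 : ℝ) 1) (hq : 0 < q)
    (D : ℕ) (hD : 1 ≤ D)
    (Ehat : Set E)
    (hcut : ∀ e ∈ Ehat, ∃ χ : Finset E,
      (χ : Set E) ∈ Cutsets ends α Ehatᶜ e ∧ χ.card ≤ D - 1)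
    (δ : ℝ)
    (hδ : δ = |pPrime p q - p| * (1 - max p (pPrime p q)) ^ (D - 1)) :
    (p < pPrime p q →
      StochDom (berProb fun e => p + (if e ∈ Ehat then δ else 0)) (fkProb ends α p q)) ∧
    (pPrime p q < p →
      StochDom (fkProb ends α p q) (berProb fun e => p - (if e ∈ Ehat then δ else 0))) := by
  obtain ⟨hp'0, hp'1⟩ := pPrime_mem p q hp hq
  have hp0 := hp.1
  have hp1 := hp.2
  have hm : 0 ≤ 1 - max p (pPrime p q) := by
    have := max_lt hp.2 hp'1; linarith
  have hm1 : 1 - max p (pPrime p q) ≤ 1 := by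
    have := le_max_left p (pPrime p q); linarith
  have hδ0 : 0 ≤ δ := by rw [hδ]; positivity
  have hδ1 : δ ≤ |pPrime p q - p| := by
    rw [hδ]; exact mul_le_of_le_one_right (abs_nonneg _) (pow_le_one₀ hm hm1)
  constructor
  · intro hlt A hA
    have habs : |pPrime p q - p| = pPrime p q - p := abs_of_pos (sub_pos.2 hlt)
    have := cmp_prob 1 _ (fk_pos ends α p q hp hq) (fun e => p + (if e ∈ Ehat then δ else 0))
      (fk_cmp ends α p q hp hq D Ehat hcut δ 1 (by norm_num) (by rw [habs, one_mul]) hδ _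
        (fun e => by ring) (fun e => by
          split_ifs <;> constructor <;> linarith)) A hA
    unfold fkProb
    linarith
  · intro hlt A hA
    have habs : |pPrime p q - p| = p - pPrime p q := by
      rw [abs_of_neg (sub_neg.2 hlt)]; ring
    have := cmp_prob (-1) _ (fk_pos ends α p q hp hq) (fun e => p - (if e ∈ Ehat then δ else 0))
      (fk_cmp ends α p q hp hq D Ehat hcut δ (-1) (by norm_num) (by rw [habs]; ring) hδ _
        (fun e => by ring) (fun e => by
          split_ifs <;> constructor <;> linarith)) A hA
    unfold fkProb
    linarith
end FKPaper
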